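/- Let T be a rooted tree on the vertex set of a flow graph G, and let G' be the derived graph of G with respect to T. If T has both the parent property and the sibling property, then for every vertex v ≠ s, either (t(v), v) ∈ A or at least two distinct arcs of G' enter v. -/

import Mathlib

variable {V : Type*}

/-- `IsWalk A u v p`: `p` is a path from `u` to `v` in the digraph with arc
relation `A`, listing all of its vertices in order. -/
def IsWalk (A : V → V → Prop) (u v : V) (p : List V) : Prop :=
  p.Chain' A ∧ p.head? = some u ∧ p.getLast? = some v

/-- A flow graph: a directed graph with arc relation `A` and start vertex `s`
such that every vertex is reachable from `s` and no arc enters `s`. -/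
structure FlowGraph (V : Type*) where
  A : V → V → Prop
  s : V
  reach : ∀ v : V, ∃ p : List V, IsWalk A s v p
  no_enter : ∀ v : V, ¬ A v s

/-- `DomOn A s v w`: `v` lies on every path from `s` to `w` in the digraph with
arc relation `A`. -/
def DomOn (A : V → V → Prop) (s v w : V) : Prop :=
  ∀ p : List V, IsWalk A s w p → v ∈ p

/-- `v` dominates `w` in the flow graph `G`. -/
def FlowGraph.Dom (G : FlowGraph V) (v w : V) : Prop :=
  DomOn G.A G.s v w

/-- A rooted tree on vertex set `V`, given by a parent function: the root is a
fixed point of the parent function, and iterating the parent function from any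
vertex eventually reaches the root. -/
structure ParentTree (V : Type*) where
  parent : V → V
  root : V
  parent_root : parent root = root
  reaches_root : ∀ v : V, ∃ n : ℕ, parent^[n] v = root

/-- `T.Anc x y`: `x` is an ancestor of `y` in the rooted tree `T` (every vertex
is an ancestor of itself). -/
def ParentTree.Anc (T : ParentTree V) (x y : V) : Prop :=
  ∃ n : ℕ, T.parent^[n] y = x

/-- `T` has the parent property with respect to `G`: for every arc `(v, w)`,
the parent of `w` is an ancestor of `v` in `T`. -/
def ParentProperty (G : FlowGraph V) (T : ParentTree V) : Prop :=
  ∀ v w : V, G.A v w → T.Anc (T.parent w) v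

/-- The sibling property with respect to an arbitrary arc relation `A` with
start vertex `s`: no non-root vertex dominates a distinct vertex with the same
parent. -/
def SiblingPropertyOn (A : V → V → Prop) (s : V) (T : ParentTree V) : Prop :=
  ∀ v w : V, v ≠ T.root → w ≠ T.root → v ≠ w → T.parent v = T.parent w →
    ¬ DomOn A s v w

/-- `T` has the sibling property with respect to the flow graph `G`. -/
def SiblingProperty (G : FlowGraph V) (T : ParentTree V) : Prop :=
  SiblingPropertyOn G.A G.s T

/-- `T` is the dominator tree of the digraph with arc relation `A` and start
vertex `s`: `T` is rooted at `s`, and the parent of every vertex `v ≠ s` is its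
immediate dominator, i.e. a strict dominator of `v` that is dominated by every
strict dominator of `v`. -/
def IsDomTreeOn (A : V → V → Prop) (s : V) (T : ParentTree V) : Prop :=
  T.root = s ∧ ∀ v : V, v ≠ s →
    DomOn A s (T.parent v) v ∧ T.parent v ≠ v ∧
    ∀ u : V, DomOn A s u v → u ≠ v → DomOn A s u (T.parent v)

/-- `T` is the dominator tree of the flow graph `G`. -/
def IsDomTree (G : FlowGraph V) (T : ParentTree V) : Prop :=
  IsDomTreeOn G.A G.s T

/-- `ord` is (the numbering of) a preorder of the rooted tree `T`: an injective
numbering of the vertices such that for every vertex `v` the descendants of `v`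
are ordered consecutively, with `v` first. -/
def IsTreePreorder (T : ParentTree V) (ord : V → ℕ) : Prop :=
  Function.Injective ord ∧
  (∀ v x : V, T.Anc v x → ord v ≤ ord x) ∧
  (∀ v x y z : V, T.Anc v x → T.Anc v z → ord x ≤ ord y → ord y ≤ ord z →
    T.Anc v y)

/-- A preorder `ord` of `T` is low-high on the digraph with arc relation `A`
and start vertex `s`: for every `v ≠ s`, either `(t(v), v)` is an arc, or there
are arcs `(u, v)` and `(w, v)` with `u < v < w` in the order and `w` not a
descendant of `v` in `T`. -/
def LowHighOn (A : V → V → Prop) (s : V) (T : ParentTree V) (ord : V → ℕ) :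
    Prop :=
  IsTreePreorder T ord ∧
  ∀ v : V, v ≠ s → (A (T.parent v) v ∨
    ∃ u w : V, A u v ∧ A w v ∧ ord u < ord v ∧ ord v < ord w ∧ ¬ T.Anc v w)

/-- A low-high order of `T` on the flow graph `G`. -/
def LowHigh (G : FlowGraph V) (T : ParentTree V) (ord : V → ℕ) : Prop :=
  LowHighOn G.A G.s T ord

/-- `B` is (the arc relation of) a spanning tree of `G` rooted at `s`: a
subgraph of `G` in which no arc enters `s`, every vertex other than `s` has
exactly one entering arc, and every vertex is reachable from `s`. -/
def IsSpanningTree (G : FlowGraph V) (B : V → V → Prop) : Prop :=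
  (∀ u v : V, B u v → G.A u v) ∧
  (∀ v : V, ¬ B v G.s) ∧
  (∀ v : V, v ≠ G.s → ∃! u : V, B u v) ∧
  (∀ v : V, ∃ p : List V, IsWalk B G.s v p)

/-- Spanning trees `B` and `R` of `G` rooted at `s` are independent: for every
vertex `v`, the paths from `s` to `v` in `B` and in `R` have in common only
dominators of `v`. -/
def Independent (G : FlowGraph V) (B R : V → V → Prop) : Prop :=
  ∀ v : V, ∀ p q : List V, IsWalk B G.s v p → IsWalk R G.s v q →
    ∀ x : V, x ∈ p → x ∈ q → G.Dom x v

/-- Spanning trees `B` and `R` of `G` rooted at `s` are strongly independent: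
for every pair of vertices `v`, `w`, either the path from `s` to `v` in `B` and
the path from `s` to `w` in `R` have in common only common dominators of `v`
and `w`, or the same holds with the roles of `B` and `R` exchanged. -/
def StronglyIndependent (G : FlowGraph V) (B R : V → V → Prop) : Prop :=
  ∀ v w : V,
    (∀ p q : List V, IsWalk B G.s v p → IsWalk R G.s w q →
      ∀ x : V, x ∈ p → x ∈ q → G.Dom x v ∧ G.Dom x w) ∨
    (∀ p q : List V, IsWalk R G.s v p → IsWalk B G.s w q →
      ∀ x : V, x ∈ p → x ∈ q → G.Dom x v ∧ G.Dom x w)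

/-- `IsDerivedArcOf G T v b a`: `(a, b)` is the derived arc of the arc `(v, b)`
of `G` with respect to `T`: `b` is not an ancestor of `v` in `T`, and `a = v`
if `v` is the parent of `b`, while otherwise `a` is the sibling of `b` in `T`
that is an ancestor of `v`. -/
def IsDerivedArcOf (G : FlowGraph V) (T : ParentTree V) (v b a : V) : Prop :=
  G.A v b ∧ ¬ T.Anc b v ∧
    ((v = T.parent b ∧ a = v) ∨
     (v ≠ T.parent b ∧ a ≠ T.root ∧ T.parent a = T.parent b ∧ T.Anc a v))

/-- The arc relation of the derived graph of `G` with respect to `T`. -/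
def DerivedArc (G : FlowGraph V) (T : ParentTree V) (a b : V) : Prop :=
  ∃ v : V, IsDerivedArcOf G T v b a

/-- `S` is the vertex set of a strongly connected subgraph of the digraph with
arc relation `A`. -/
def StronglyConnectedSet (A : V → V → Prop) (S : Set V) : Prop :=
  S.Nonempty ∧ ∀ u ∈ S, ∀ v ∈ S, ∃ p : List V,
    IsWalk A u v p ∧ ∀ x ∈ p, x ∈ S

/-- `G` is reducible: every strongly connected subgraph has a single entry
vertex, i.e. a vertex of the subgraph contained in every path from `s` to a
vertex of the subgraph. -/
def Reducible (G : FlowGraph V) : Prop :=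
  ∀ S : Set V, StronglyConnectedSet G.A S →
    ∃ v ∈ S, ∀ u ∈ S, ∀ p : List V, IsWalk G.A G.s u p → v ∈ p

/-- A digraph is acyclic if it has no cycle (a path from a vertex to itself
with at least one arc). -/
def Acyclic (A : V → V → Prop) : Prop :=
  ¬ ∃ (v : V) (p : List V), IsWalk A v v p ∧ 2 ≤ p.length

/-- `IsHighWalk A ν u v p`: `p` is a high path from `u` to `v`: a path all of
whose vertices other than `u` and `v` are greater (in the numbering `ν`) than
both `u` and `v`. -/
def IsHighWalk (A : V → V → Prop) (ν : V → ℕ) (u v : V) (p : List V) : Prop :=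
  IsWalk A u v p ∧ ∀ x ∈ p, x ≠ u → x ≠ v → ν u < ν x ∧ ν v < ν x

theorem anc_trans' (T : ParentTree V) {x y z : V} (h : T.Anc x y) (k : T.Anc y z) :
    T.Anc x z := by
  obtain ⟨n, rfl⟩ := h
  obtain ⟨m, rfl⟩ := k
  exact ⟨n + m, Function.iterate_add_apply _ _ _ _⟩

theorem anc_root' (T : ParentTree V) {x : V} (h : T.Anc x T.root) : x = T.root := by
  obtain ⟨n, rfl⟩ := h
  exact Function.iterate_fixed T.parent_root n

theorem anc_cases' (T : ParentTree V) {x y : V} (h : T.Anc x y) :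
    y = x ∨ T.Anc x (T.parent y) := by
  obtain ⟨n, hn⟩ := h
  cases n with
  | zero => exact Or.inl hn
  | succ n => exact Or.inr ⟨n, hn⟩

theorem exists_child' (T : ParentTree V) (c : V) (n : ℕ) : ∀ x : V, T.parent^[n] x = c → c ≠ x →
    ∃ a, a ≠ c ∧ T.parent a = c ∧ T.Anc a x := by
  induction n with
  | zero => intro x h hne; exact absurd h.symm hne
  | succ n ih =>
    intro x h hne
    by_cases hc : c = T.parent x
    · exact ⟨x, hne.symm, hc.symm, 0, rfl⟩
    · obtain ⟨a, h1, h2, h3⟩ := ih (T.parent x) h hc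
      exact ⟨a, h1, h2, anc_trans' T h3 ⟨1, rfl⟩⟩

theorem entry' (G : FlowGraph V) (T : ParentTree V) (hroot : T.root = G.s)
    (hpp : ParentProperty G T) (u : V) (hu : u ≠ T.root) (p : List V) :
    ∀ w, IsWalk G.A G.s w p → T.Anc u w →
      u ∈ p ∧ ∃ q x, IsWalk G.A G.s x q ∧ (∀ z ∈ q, z ∈ p) ∧ G.A x u ∧ ¬ T.Anc u x := by
  induction p using List.reverseRecOn with
  | nil => intro w h; simp [IsWalk] at h
  | append_singleton q w' ih =>
    rintro w ⟨hc, hh, hl⟩ ha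
    have hw : w' = w := by simpa using hl
    subst hw
    rcases List.eq_nil_or_concat q with rfl | ⟨r, x, hr⟩
    · have : w' = G.s := by simpa using hh
      rw [this, ← hroot] at ha
      exact absurd (anc_root' T ha) hu
    · have hq : q ≠ [] := by simp [hr]
      have hlast : q.getLast? = some x := by simp [hr]
      have hc' := List.isChain_append.mp hc
      have hA : G.A x w' := hc'.2.2 x (by simp [hlast]) w' (by simp)
      have hwalk : IsWalk G.A G.s x q := by
        refine ⟨hc'.1, ?_, hlast⟩
        rw [← hh, List.head?_append_of_ne_nil _ hq]
      by_cases hx : T.Anc u x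
      · obtain ⟨h1, q', y, h2, h3, h4⟩ := ih x hwalk hx
        exact ⟨by simp [h1], q', y, h2, fun z hz => by simp [h3 z hz], h4⟩
      · rcases anc_cases' T ha with rfl | h
        · exact ⟨by simp, q, x, hwalk, fun z hz => by simp [hz], hA, hx⟩
        · exact absurd (anc_trans' T h (hpp _ _ hA)) hx

/-- If `T` has the parent property and the sibling property, then for every
vertex `v ≠ s`, either `(t(v), v)` is an arc of `G` or at least two distinct
arcs of the derived graph enter `v`. -/
theorem stmt14 [Fintype V] (G : FlowGraph V) (T : ParentTree V)
    (hroot : T.root = G.s) (hpp : ParentProperty G T)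
    (hsp : SiblingProperty G T)
    (v : V) (hv : v ≠ G.s) :
    G.A (T.parent v) v ∨
    ∃ a₁ a₂ : V, a₁ ≠ a₂ ∧ DerivedArc G T a₁ v ∧ DerivedArc G T a₂ v := by
  by_cases hA : G.A (T.parent v) v
  · exact Or.inl hA
  right
  have hvr : v ≠ T.root := hroot ▸ hv
  have key : ∀ p, IsWalk G.A G.s v p → ∃ a, DerivedArc G T a v ∧ a ≠ T.root ∧ a ≠ v ∧
      T.parent a = T.parent v ∧ a ∈ p := by
    intro p hp
    obtain ⟨-, q, x, hq, hqp, hxv, hnx⟩ := entry' G T hroot hpp v hvr p v hp ⟨0, rfl⟩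
    have hne : T.parent v ≠ x := by
      rintro rfl
      exact hA hxv
    obtain ⟨n, hn⟩ := hpp _ _ hxv
    obtain ⟨a, h1, h2, h3⟩ := exists_child' T _ n x hn hne
    have har : a ≠ T.root := by
      rintro rfl
      exact h1 (T.parent_root.symm.trans h2)
    refine ⟨a, ⟨x, hxv, hnx, Or.inr ⟨hne.symm, har, h2, h3⟩⟩, har, ?_, h2, ?_⟩
    · rintro rfl
      exact hnx h3
    · exact hqp _ (entry' G T hroot hpp a har q x hq h3).1
  obtain ⟨p, hp⟩ := G.reach v
  obtain ⟨a, ha, har, hav, hpa, -⟩ := key p hp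
  have hnd := hsp a v har hvr hav hpa
  unfold DomOn at hnd
  push Not at hnd
  obtain ⟨p', hp', hnot⟩ := hnd
  obtain ⟨b, hb, -, -, -, hbp⟩ := key p' hp'
  refine ⟨a, b, ?_, ha, hb⟩
  rintro rfl
  exact hnot hbp
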